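/- arXiv:2106.00109 — 4 statements merged into one kernel-verified Lean document; each statement's English description precedes it below -/
import Mathlib

section
/- Let α, β > 0 and let (x*, z*, λ*, μ*) ∈ X × ℝᵐ × ℝᵐ₊ × ℝᵐ be a saddle point of the proximal-perturbed Lagrangian L subject to X. Then x* is feasible, i.e. g(x*) ≤ 0 componentwise, and x* minimizes θ over the feasible set: θ(x*) ≤ θ(x) for every x ∈ X with g(x) ≤ 0 componentwise. (Applied to each player ν of a generalized Nash game, with the other players' strategies fixed at their equilibrium values so that θ and g are that player's objective and constraint maps, this says that a collection of saddle points of the players' P-Lagrangians yields a generalized Nash equilibrium.) -/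
open scoped InnerProductSpace
open Filter Topology

/-- The proximal-perturbed Lagrangian (P-Lagrangian)
`L(x, z, λ, μ) = θ(x) + ⟨λ, g(x) − z⟩ + ⟨μ, z⟩ + (α/2)‖z‖² − (β/2)‖λ − μ‖²`. -/
noncomputable def PLag {n m : ℕ} (θ : EuclideanSpace ℝ (Fin n) → ℝ)
    (g : EuclideanSpace ℝ (Fin n) → EuclideanSpace ℝ (Fin m)) (α β : ℝ)
    (x : EuclideanSpace ℝ (Fin n)) (z lam mu : EuclideanSpace ℝ (Fin m)) : ℝ :=
  θ x + ⟪lam, g x - z⟫_ℝ + ⟪mu, z⟫_ℝ + (α / 2) * ‖z‖ ^ 2 - (β / 2) * ‖lam - mu‖ ^ 2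

/-- `(x*, z*, λ*, μ*)` is a saddle point of the P-Lagrangian subject to `X`:
`x* ∈ X`, `λ* ∈ ℝᵐ₊`, and
`L(x*, z*, λ, μ) ≤ L(x*, z*, λ*, μ*) ≤ L(x, z, λ*, μ*)` for all
`(x, z, λ, μ) ∈ X × ℝᵐ × ℝᵐ₊ × ℝᵐ`. -/
def IsSaddlePt {n m : ℕ} (θ : EuclideanSpace ℝ (Fin n) → ℝ)
    (g : EuclideanSpace ℝ (Fin n) → EuclideanSpace ℝ (Fin m)) (α β : ℝ)
    (X : Set (EuclideanSpace ℝ (Fin n)))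
    (xs : EuclideanSpace ℝ (Fin n)) (zs ls ms : EuclideanSpace ℝ (Fin m)) : Prop :=
  xs ∈ X ∧ (∀ i, 0 ≤ ls i) ∧
    (∀ lam mu : EuclideanSpace ℝ (Fin m), (∀ i, 0 ≤ lam i) →
      PLag θ g α β xs zs lam mu ≤ PLag θ g α β xs zs ls ms) ∧
    (∀ x ∈ X, ∀ z : EuclideanSpace ℝ (Fin m),
      PLag θ g α β xs zs ls ms ≤ PLag θ g α β x z ls ms)

/-- At a saddle point of the P-Lagrangian the perturbation variable vanishes and the two
multipliers agree. -/
lemma IsSaddlePt.perturbation_eq_zero_and_multipliers_eq {n m : ℕ}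
    {θ : EuclideanSpace ℝ (Fin n) → ℝ}
    {g : EuclideanSpace ℝ (Fin n) → EuclideanSpace ℝ (Fin m)} {α β : ℝ}
    (hα : 0 < α) (hβ : 0 < β) {X : Set (EuclideanSpace ℝ (Fin n))}
    {xs : EuclideanSpace ℝ (Fin n)} {zs ls ms : EuclideanSpace ℝ (Fin m)}
    (h : IsSaddlePt θ g α β X xs zs ls ms) : zs = 0 ∧ ms = ls := by
  obtain ⟨hxs, hls, hmax, hmin⟩ := h
  have hz := hmin xs hxs 0
  have hmu := hmax ls ls hls
  simp only [PLag, inner_sub_right, inner_zero_right, sub_self, norm_zero] at hz hmu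
  have hzsq : 0 ≤ α / 2 * ‖zs‖ ^ 2 := by positivity
  have hmusq : 0 ≤ β / 2 * ‖ls - ms‖ ^ 2 := by positivity
  have hz0 : α / 2 * ‖zs‖ ^ 2 = 0 := by linarith
  have hmu0 : β / 2 * ‖ls - ms‖ ^ 2 = 0 := by linarith
  constructor
  · simpa [hα.ne'] using hz0
  · symm
    simpa [hβ.ne', sub_eq_zero] using hmu0

/-- Theorem 1 of the paper. If `(x*, z*, λ*, μ*)` is a saddle point of the
P-Lagrangian subject to `X` (for some `α, β > 0`), then `x*` is feasible (`g(x*) ≤ 0`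
componentwise) and `x*` minimizes `θ` over the feasible set. -/
theorem saddle_point_is_equilibrium {n m : ℕ}
    (θ : EuclideanSpace ℝ (Fin n) → ℝ)
    (g : EuclideanSpace ℝ (Fin n) → EuclideanSpace ℝ (Fin m))
    (α β : ℝ) (hα : 0 < α) (hβ : 0 < β)
    (X : Set (EuclideanSpace ℝ (Fin n)))
    (hXne : X.Nonempty) (hXcl : IsClosed X) (hXcv : Convex ℝ X)
    (xs : EuclideanSpace ℝ (Fin n)) (zs ls ms : EuclideanSpace ℝ (Fin m))
    (hsaddle : IsSaddlePt θ g α β X xs zs ls ms) :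
    (∀ i, g xs i ≤ 0) ∧ ∀ x ∈ X, (∀ i, g x i ≤ 0) → θ xs ≤ θ x := by
  obtain ⟨rfl, rfl⟩ := hsaddle.perturbation_eq_zero_and_multipliers_eq hα hβ
  obtain ⟨-, hls, hmax, hmin⟩ := hsaddle
  have hdual : ∀ lam : EuclideanSpace ℝ (Fin m), (∀ i, 0 ≤ lam i) →
      ⟪lam, g xs⟫_ℝ ≤ ⟪ms, g xs⟫_ℝ := fun lam hlam => by
    simpa [PLag] using hmax lam lam hlam
  refine ⟨fun i => ?_, fun x hx hgx => ?_⟩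
  · have hi := hdual (ms + EuclideanSpace.single i 1) fun j => by
      have hj := hls j
      simp only [PiLp.add_apply, PiLp.single_apply]
      split_ifs <;> linarith
    simpa [inner_add_left, EuclideanSpace.inner_single_left] using hi
  · have hcomp : 0 ≤ ⟪ms, g xs⟫_ℝ := by simpa using hdual 0 fun _ => le_rfl
    have hprimal : θ xs + ⟪ms, g xs⟫_ℝ ≤ θ x + ⟪ms, g x⟫_ℝ := by
      simpa [PLag] using hmin x hx 0
    have hnonpos : ⟪ms, g x⟫_ℝ ≤ 0 := by
      rw [PiLp.inner_apply]
      exact Finset.sum_nonpos fun i _ => mul_nonpos_of_nonpos_of_nonneg (hgx i) (hls i)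
    linarith
end

section
/- Suppose θ : ℝⁿ → ℝ and each component gᵢ : ℝⁿ → ℝ are differentiable and convex, X ⊆ ℝⁿ is nonempty closed convex, and x* ∈ X satisfies the KKT conditions with a multiplier η* ∈ ℝᵐ: η* ≥ 0, g(x*) ≤ 0 componentwise, ⟨η*, g(x*)⟩ = 0, and ⟨∇θ(x*) + Σᵢ ηᵢ* ∇gᵢ(x*), x − x*⟩ ≥ 0 for all x ∈ X. Then for any α, β > 0, the tuple (x*, z*, λ*, μ*) with z* = 0 and λ* = μ* = η* is a saddle point of the proximal-perturbed Lagrangian L subject to X. -/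
open scoped InnerProductSpace
open Filter Topology

/-- A convex function lies above its tangent hyperplanes. -/
theorem ConvexOn.add_inner_gradient_le {F : Type*} [NormedAddCommGroup F]
    [InnerProductSpace ℝ F] [CompleteSpace F] {f : F → ℝ} {x : F}
    (hf : ConvexOn ℝ Set.univ f) (hd : DifferentiableAt ℝ f x) (y : F) :
    f x + ⟪gradient f x, y - x⟫_ℝ ≤ f y := by
  have hconv : ConvexOn ℝ Set.univ (f ∘ AffineMap.lineMap (k := ℝ) x y) :=
    hf.comp_affineMap (AffineMap.lineMap x y)
  have hderiv : HasDerivAt (f ∘ AffineMap.lineMap (k := ℝ) x y)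
      ⟪gradient f x, y - x⟫_ℝ 0 := by
    have hgrad : HasFDerivAt f (InnerProductSpace.toDual ℝ F (gradient f x))
        (AffineMap.lineMap (k := ℝ) x y 0) := by
      rw [AffineMap.lineMap_apply_zero]
      exact hd.hasGradientAt.hasFDerivAt
    simpa using hgrad.comp_hasDerivAt (0 : ℝ) AffineMap.hasDerivAt_lineMap
  have hslope := hconv.le_slope_of_hasDerivAt (Set.mem_univ _) (Set.mem_univ _) one_pos hderiv
  simp only [slope_def_field, Function.comp_apply, AffineMap.lineMap_apply_one,
    AffineMap.lineMap_apply_zero, sub_zero, div_one] at hslope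
  linarith

/-- Theorem 2 of the paper. If `θ` and each `gᵢ` are differentiable and
convex, `X` is nonempty closed convex, and `x* ∈ X` satisfies the KKT conditions with
multiplier `η* ≥ 0` (feasibility, complementary slackness, and the variational inequality for
the Lagrangian gradient), then `(x*, 0, η*, η*)` is a saddle point of the P-Lagrangian
subject to `X`, for any `α, β > 0`. -/
theorem kkt_point_is_saddle_point {n m : ℕ}
    (θ : EuclideanSpace ℝ (Fin n) → ℝ)
    (g : EuclideanSpace ℝ (Fin n) → EuclideanSpace ℝ (Fin m))
    (X : Set (EuclideanSpace ℝ (Fin n)))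
    (hXne : X.Nonempty) (hXcl : IsClosed X) (hXcv : Convex ℝ X)
    (hθd : Differentiable ℝ θ) (hθc : ConvexOn ℝ Set.univ θ)
    (hgd : ∀ i, Differentiable ℝ (fun x => g x i))
    (hgc : ∀ i, ConvexOn ℝ Set.univ (fun x => g x i))
    (xs : EuclideanSpace ℝ (Fin n)) (eta : EuclideanSpace ℝ (Fin m))
    (hxs : xs ∈ X)
    (heta : ∀ i, 0 ≤ eta i)
    (hfeas : ∀ i, g xs i ≤ 0)
    (hcomp : ⟪eta, g xs⟫_ℝ = 0)
    (hVI : ∀ x ∈ X,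
      0 ≤ ⟪gradient θ xs + ∑ i, eta i • gradient (fun y => g y i) xs, x - xs⟫_ℝ)
    (α β : ℝ) (hα : 0 < α) (hβ : 0 < β) :
    IsSaddlePt θ g α β X xs 0 eta eta := by
  have inner_eq_sum : ∀ u v : EuclideanSpace ℝ (Fin m), ⟪u, v⟫_ℝ = ∑ i, u i * v i := by
    intro u v
    simp [PiLp.inner_apply, mul_comm]
  have hvalue : PLag θ g α β xs 0 eta eta = θ xs := by
    simp [PLag, hcomp]
  refine ⟨hxs, heta, fun lam mu hlam => ?_, fun x hx z => ?_⟩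
  · have hle : ⟪lam, g xs⟫_ℝ ≤ 0 := by
      rw [inner_eq_sum]
      exact Finset.sum_nonpos fun i _ => mul_nonpos_of_nonneg_of_nonpos (hlam i) (hfeas i)
    have hpen : 0 ≤ β / 2 * ‖lam - mu‖ ^ 2 := by positivity
    rw [hvalue]
    simp only [PLag, sub_zero, inner_zero_right, norm_zero]
    linarith
  · have hθ := hθc.add_inner_gradient_le (hθd xs) x
    have hg : ⟪eta, g xs⟫_ℝ + ∑ i, eta i * ⟪gradient (fun y => g y i) xs, x - xs⟫_ℝ
        ≤ ⟪eta, g x⟫_ℝ := by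
      rw [inner_eq_sum, inner_eq_sum, ← Finset.sum_add_distrib]
      refine Finset.sum_le_sum fun i _ => ?_
      rw [← mul_add]
      exact mul_le_mul_of_nonneg_left ((hgc i).add_inner_gradient_le (hgd i xs) x) (heta i)
    have hstat := hVI x hx
    simp only [inner_add_left, sum_inner, real_inner_smul_left] at hstat
    have hprox : 0 ≤ α / 2 * ‖z‖ ^ 2 := by positivity
    rw [hvalue]
    simp only [PLag, inner_sub_right, sub_self, norm_zero]
    linarith
end

section
/- Sufficient decrease of the P-Lagrangian (Lemma 4). Let θ : ℝⁿ → ℝ and g : ℝⁿ → ℝᵐ be continuously differentiable, α, β, γ > 0, L_g > 0, and suppose the map x ↦ ∇θ(x) + Σᵢ λᵢ ∇gᵢ(x) is Lipschitz with constant L₀ uniformly for the multipliers involved. Suppose the iterates satisfy: μᵏ = λᵏ, zᵏ = 0, z^{k+1} = (λᵏ − μᵏ)/α = 0, μ^{k+1} = λ^{k+1}, the primal step satisfies ⟨∇θ(xᵏ) + Σᵢ λᵢᵏ ∇gᵢ(xᵏ), x^{k+1} − xᵏ⟩ + (γ/2)‖x^{k+1} − xᵏ‖² ≤ 0, and the dual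 step satisfies ⟨λ^{k+1} − λᵏ, g(x^{k+1})⟩ ≤ (3L_g²/(2β))‖x^{k+1} − xᵏ‖². Then L(x^{k+1}, z^{k+1}, λ^{k+1}, μ^{k+1}) ≤ L(xᵏ, zᵏ, λᵏ, μᵏ) − (1/2)(γ − L₀ − 3L_g²/β)‖x^{k+1} − xᵏ‖²; in particular, if γ ≥ L₀ + 3L_g²/β, the P-Lagrangian value does not increase from iteration k to k+1. -/
open scoped InnerProductSpace
open Filter Topology

/-- Descent lemma: a function whose gradient field `f'` is `K`-Lipschitz lies below its quadratic
model. -/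
theorem le_add_inner_add_sq_of_lipschitz_gradient {E : Type*} [NormedAddCommGroup E]
    [InnerProductSpace ℝ E] [CompleteSpace E] {f : E → ℝ} {f' : E → E} {K : ℝ}
    (hf : ∀ x, HasGradientAt f (f' x) x) (hK : ∀ x y, ‖f' x - f' y‖ ≤ K * ‖x - y‖) (x y : E) :
    f y ≤ f x + ⟪f' x, y - x⟫_ℝ + K / 2 * ‖y - x‖ ^ 2 := by
  have hline (t : ℝ) : HasDerivAt (fun t : ℝ => x + t • (y - x)) (y - x) t := by
    simpa using ((hasDerivAt_id t).smul_const (y - x)).const_add x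
  have hφ (t : ℝ) : HasDerivAt (fun t : ℝ => f (x + t • (y - x)))
      ⟪f' (x + t • (y - x)), y - x⟫_ℝ t := by
    have hcomp := (hf (x + t • (y - x))).hasFDerivAt.comp_hasDerivAt t (hline t)
    rw [InnerProductSpace.toDual_apply_apply] at hcomp
    exact hcomp
  have hB (t : ℝ) : HasDerivAt
      (fun t : ℝ => f x + t * ⟪f' x, y - x⟫_ℝ + K / 2 * ‖y - x‖ ^ 2 * t ^ 2)
      (⟪f' x, y - x⟫_ℝ + K * ‖y - x‖ ^ 2 * t) t := by
    refine ((((hasDerivAt_id t).mul_const ⟪f' x, y - x⟫_ℝ).const_add (f x)).add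
      ((hasDerivAt_pow 2 t).const_mul (K / 2 * ‖y - x‖ ^ 2))).congr_deriv ?_
    norm_num
    ring
  have hmain := image_le_of_deriv_right_le_deriv_boundary (a := 0) (b := 1)
    (fun t _ => (hφ t).continuousAt.continuousWithinAt) (fun t _ => (hφ t).hasDerivWithinAt)
    (by simp) (fun t _ => (hB t).continuousAt.continuousWithinAt)
    (fun t _ => (hB t).hasDerivWithinAt)
    (fun t ht => by
      have hinner := real_inner_le_norm (f' (x + t • (y - x)) - f' x) (y - x)
      have hnorm := hK (x + t • (y - x)) x
      rw [add_sub_cancel_left, norm_smul, Real.norm_of_nonneg ht.1] at hnorm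
      have hmul := mul_le_mul_of_nonneg_right hnorm (norm_nonneg (y - x))
      rw [inner_sub_left] at hinner
      linarith)
    (Set.right_mem_Icc.2 zero_le_one)
  simpa using hmain

/-- The gradient of the Lagrangian `x ↦ θ x + ⟪lam, g x⟫`, in coordinates. -/
theorem hasGradientAt_add_inner {n m : ℕ} {θ : EuclideanSpace ℝ (Fin n) → ℝ}
    {g : EuclideanSpace ℝ (Fin n) → EuclideanSpace ℝ (Fin m)} {x : EuclideanSpace ℝ (Fin n)}
    (hθ : DifferentiableAt ℝ θ x) (hg : DifferentiableAt ℝ g x)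
    (lam : EuclideanSpace ℝ (Fin m)) :
    HasGradientAt (fun v => θ v + ⟪lam, g v⟫_ℝ)
      (gradient θ x + ∑ i, lam i • gradient (fun v => g v i) x) x := by
  have hgi (i : Fin m) : DifferentiableAt ℝ (fun v => g v i) x :=
    differentiableAt_euclidean.1 hg i
  have hsum := hθ.hasGradientAt.hasFDerivAt.add
    (HasFDerivAt.fun_sum fun i (_ : i ∈ Finset.univ) =>
      (hgi i).hasGradientAt.hasFDerivAt.const_mul (lam i))
  have hfun : (fun v => θ v + ⟪lam, g v⟫_ℝ) = θ + fun v => ∑ i, lam i * g v i := by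
    ext v
    simp [PiLp.inner_apply, mul_comm]
  rw [hasGradientAt_iff_hasFDerivAt, hfun]
  refine hsum.congr_fderiv ?_
  simp only [map_add, map_sum, map_smul]

/-- Lemma 4, sufficient decrease of the P-Lagrangian. Under the algorithm's
update relations (`μᵏ = λᵏ`, `zᵏ = 0`, `z^{k+1} = (λᵏ − μᵏ)/α`, `μ^{k+1} = λ^{k+1}`), a primal
step satisfying the proximal-model decrease condition, a dual step satisfying the multiplier
estimate, and `L₀`-Lipschitzness of `x ↦ ∇θ(x) + Σᵢ λᵢᵏ ∇gᵢ(x)`, the P-Lagrangian decreases: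
`L^{k+1} ≤ Lᵏ − (1/2)(γ − L₀ − 3L_g²/β)‖x^{k+1} − xᵏ‖²`; in particular it does not increase
when `γ ≥ L₀ + 3L_g²/β`. -/
theorem plagrangian_sufficient_decrease {n m : ℕ}
    (θ : EuclideanSpace ℝ (Fin n) → ℝ)
    (g : EuclideanSpace ℝ (Fin n) → EuclideanSpace ℝ (Fin m))
    (hθ : ContDiff ℝ 1 θ) (hg : ContDiff ℝ 1 g)
    (α β γ Lg L₀ : ℝ) (hα : 0 < α) (hβ : 0 < β) (hγ : 0 < γ) (hLg : 0 < Lg)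
    (xk xk1 : EuclideanSpace ℝ (Fin n))
    (zk zk1 lamk lamk1 muk muk1 : EuclideanSpace ℝ (Fin m))
    (hLip : ∀ x y : EuclideanSpace ℝ (Fin n),
      ‖(gradient θ x + ∑ i, lamk i • gradient (fun v => g v i) x) -
        (gradient θ y + ∑ i, lamk i • gradient (fun v => g v i) y)‖ ≤ L₀ * ‖x - y‖)
    (hmuk : muk = lamk)
    (hzk : zk = 0)
    (hzk1 : zk1 = α⁻¹ • (lamk - muk))
    (hmuk1 : muk1 = lamk1)
    (hprimal : ⟪gradient θ xk + ∑ i, lamk i • gradient (fun v => g v i) xk, xk1 - xk⟫_ℝ +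
        (γ / 2) * ‖xk1 - xk‖ ^ 2 ≤ 0)
    (hdual : ⟪lamk1 - lamk, g xk1⟫_ℝ ≤ (3 * Lg ^ 2 / (2 * β)) * ‖xk1 - xk‖ ^ 2) :
    PLag θ g α β xk1 zk1 lamk1 muk1 ≤
      PLag θ g α β xk zk lamk muk -
        (1 / 2) * (γ - L₀ - 3 * Lg ^ 2 / β) * ‖xk1 - xk‖ ^ 2 ∧
    (L₀ + 3 * Lg ^ 2 / β ≤ γ →
      PLag θ g α β xk1 zk1 lamk1 muk1 ≤ PLag θ g α β xk zk lamk muk) := by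
  have hdescent := le_add_inner_add_sq_of_lipschitz_gradient
    (fun x => hasGradientAt_add_inner (hθ.differentiable one_ne_zero x)
      (hg.differentiable one_ne_zero x) lamk) hLip xk xk1
  have hdecrease : PLag θ g α β xk1 zk1 lamk1 muk1 ≤
      PLag θ g α β xk zk lamk muk -
        (1 / 2) * (γ - L₀ - 3 * Lg ^ 2 / β) * ‖xk1 - xk‖ ^ 2 := by
    subst hmuk hzk hmuk1
    have hz : zk1 = 0 := by simpa using hzk1
    have hcoef : 3 * Lg ^ 2 / (2 * β) = 1 / 2 * (3 * Lg ^ 2 / β) := by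
      field_simp
    rw [hcoef, inner_sub_left] at hdual
    simp only [PLag, hz, sub_zero, sub_self, inner_zero_right, norm_zero]
    linarith
  refine ⟨hdecrease, fun hstep => hdecrease.trans (sub_le_self _ ?_)⟩
  exact mul_nonneg (by linarith) (sq_nonneg _)
end

section
/- Finite length under the Kurdyka–Łojasiewicz mechanism (core of Theorem 5). Let ρ, C > 0 and δ ∈ (0, ∞]. Let φ : [0, δ) → [0, ∞) be continuous and concave with φ(0) = 0, continuously differentiable on (0, δ) with φ′ > 0 on (0, δ). Let (aₖ)_{k≥0} be nonnegative reals and (ℓₖ)_{k≥1} be reals converging to a limit ℓ̄, such that for all k ≥ 1: ℓ̄ < ℓₖ < ℓ̄ + δ, ρ aₖ² ≤ ℓₖ − ℓ_{k+1}, and φ′(ℓₖ − ℓ̄) · C · a_{k−1} ≥ 1. Then Σ_{k≥1} aₖ < ∞; more precisely, for every K ≥ 1, Σ_{k=1}^{K} aₖ ≤ a₀ + (C/ρ) φ(ℓ₁ − ℓ̄). Consequently any sequence whose consecutive step sizes are the aₖ is Cauchy, hence convergent. -/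
open Filter Topology

/-- Tangent-line inequality for a concave function, at a point to the left of the tangency. -/
theorem ConcaveOn.deriv_mul_sub_le_sub_of_hasDerivAt {S : Set ℝ} {f : ℝ → ℝ} {x y f' : ℝ}
    (hf : ConcaveOn ℝ S f) (hx : x ∈ S) (hy : y ∈ S) (hxy : x ≤ y) (hd : HasDerivAt f f' y) :
    f' * (y - x) ≤ f y - f x := by
  rcases hxy.eq_or_lt with rfl | hlt
  · simp
  · have h := hf.le_slope_of_hasDerivAt hx hy hlt hd
    rwa [slope_def_field, le_div_iff₀ (sub_pos.mpr hlt)] at h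

/-- Summed form of `2 * a (k + 1) ≤ a k + (u k - u (k + 1))`. -/
theorem sum_Icc_add_le_of_two_mul_le {a u : ℕ → ℝ}
    (h : ∀ k, 2 * a (k + 1) ≤ a k + (u k - u (k + 1))) (K : ℕ) :
    ∑ k ∈ Finset.Icc 1 K, a k + a K ≤ a 0 + (u 0 - u K) := by
  induction K with
  | zero => simp
  | succ K ih =>
    rw [Finset.sum_Icc_succ_top (by omega)]
    linarith [h K]

/-- finite length under the Kurdyka–Łojasiewicz mechanism, core of
Theorem 5. Let `ρ, C > 0`, `δ ∈ (0, ∞]`, and let `φ` be a desingularizing function on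
`[0, δ)` (continuous, concave, `φ(0) = 0`, continuously differentiable with positive
derivative `φ′` on `(0, δ)`). If the nonnegative step sizes `aₖ` and values `ℓₖ → ℓ̄` satisfy,
for all `k ≥ 1`, `ℓ̄ < ℓₖ < ℓ̄ + δ`, the sufficient decrease `ρaₖ² ≤ ℓₖ − ℓ_{k+1}`, and the
KL inequality `φ′(ℓₖ − ℓ̄)·C·a_{k−1} ≥ 1`, then `Σ aₖ < ∞`, with
`Σ_{k=1}^{K} aₖ ≤ a₀ + (C/ρ)φ(ℓ₁ − ℓ̄)` for every `K ≥ 1`; consequently any sequence in a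
complete normed space whose consecutive step sizes are the `aₖ` is Cauchy, hence convergent. -/
theorem kl_finite_length
    (ρ C : ℝ) (hρ : 0 < ρ) (hC : 0 < C)
    (δ : EReal) (hδ : 0 < δ)
    (φ φ' : ℝ → ℝ)
    (hφ0 : φ 0 = 0)
    (hφnonneg : ∀ s : ℝ, 0 ≤ s → (s : EReal) < δ → 0 ≤ φ s)
    (hφcont : ContinuousOn φ {s : ℝ | 0 ≤ s ∧ (s : EReal) < δ})
    (hφconc : ConcaveOn ℝ {s : ℝ | 0 ≤ s ∧ (s : EReal) < δ} φ)
    (hφderiv : ∀ s : ℝ, 0 < s → (s : EReal) < δ → HasDerivAt φ (φ' s) s)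
    (hφ'cont : ContinuousOn φ' {s : ℝ | 0 < s ∧ (s : EReal) < δ})
    (hφ'pos : ∀ s : ℝ, 0 < s → (s : EReal) < δ → 0 < φ' s)
    (a : ℕ → ℝ) (ha : ∀ k, 0 ≤ a k)
    (ℓ : ℕ → ℝ) (ℓbar : ℝ)
    (hconv : Tendsto ℓ atTop (𝓝 ℓbar))
    (hgt : ∀ k, 1 ≤ k → ℓbar < ℓ k)
    (hlt : ∀ k, 1 ≤ k → ((ℓ k - ℓbar : ℝ) : EReal) < δ)
    (hdec : ∀ k, 1 ≤ k → ρ * a k ^ 2 ≤ ℓ k - ℓ (k + 1))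
    (hKL : ∀ k, 1 ≤ k → 1 ≤ φ' (ℓ k - ℓbar) * C * a (k - 1)) :
    Summable a ∧
    (∀ K, 1 ≤ K → ∑ k ∈ Finset.Icc 1 K, a k ≤ a 0 + (C / ρ) * φ (ℓ 1 - ℓbar)) ∧
    (∀ (E : Type) [NormedAddCommGroup E] [CompleteSpace E] (xseq : ℕ → E),
      (∀ k, ‖xseq (k + 1) - xseq k‖ = a k) →
      ∃ xlim : E, Tendsto xseq atTop (𝓝 xlim)) := by
  have hmem : ∀ k, 1 ≤ k → ℓ k - ℓbar ∈ {s : ℝ | 0 ≤ s ∧ (s : EReal) < δ} :=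
    fun k hk => ⟨(sub_pos.mpr (hgt k hk)).le, hlt k hk⟩
  have hstep : ∀ k, 2 * a (k + 1) ≤
      a k + (C / ρ * φ (ℓ (k + 1) - ℓbar) - C / ρ * φ (ℓ (k + 1 + 1) - ℓbar)) := by
    intro k
    have hk : 1 ≤ k + 1 := Nat.le_add_left 1 k
    have hspos := sub_pos.mpr (hgt (k + 1) hk)
    have hd := hdec (k + 1) hk
    have hkl := hKL (k + 1) hk
    rw [Nat.add_sub_cancel] at hkl
    have hp := hφ'pos _ hspos (hlt _ hk)
    have hsq : 0 ≤ ρ * a (k + 1) ^ 2 := by positivity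
    have htan := hφconc.deriv_mul_sub_le_sub_of_hasDerivAt (hmem (k + 1 + 1) (by omega))
      (hmem (k + 1) hk) (by linarith) (hφderiv _ hspos (hlt _ hk))
    rw [← mul_sub]
    set D := φ (ℓ (k + 1) - ℓbar) - φ (ℓ (k + 1 + 1) - ℓbar)
    set p := φ' (ℓ (k + 1) - ℓbar)
    have hpD : p * (ρ * a (k + 1) ^ 2) ≤ D :=
      (mul_le_mul_of_nonneg_left (by linarith) hp.le).trans htan
    have hD : 0 ≤ D := le_trans (by positivity) hpD
    have hCa : 0 ≤ C * a k := mul_nonneg hC.le (ha k)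
    have hmain : ρ * a (k + 1) ^ 2 ≤ C * a k * D := by
      calc ρ * a (k + 1) ^ 2 ≤ p * C * a k * (ρ * a (k + 1) ^ 2) :=
            le_mul_of_one_le_left hsq hkl
        _ = C * a k * (p * (ρ * a (k + 1) ^ 2)) := by ring
        _ ≤ C * a k * D := mul_le_mul_of_nonneg_left hpD hCa
    have hprod : a (k + 1) ^ 2 ≤ a k * (C / ρ * D) := by
      rw [show a k * (C / ρ * D) = C * a k * D / ρ by ring, le_div_iff₀ hρ]
      linarith
    have ht : 0 ≤ C / ρ * D := by positivity
    refine le_of_sq_le_sq ?_ (add_nonneg (ha k) ht)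
    nlinarith [sq_nonneg (a k - C / ρ * D)]
  have hbound : ∀ K, ∑ k ∈ Finset.Icc 1 K, a k ≤ a 0 + C / ρ * φ (ℓ 1 - ℓbar) := by
    intro K
    have h := sum_Icc_add_le_of_two_mul_le
      (u := fun k => C / ρ * φ (ℓ (k + 1) - ℓbar)) hstep K
    have hφK := hφnonneg _ (hmem (K + 1) (by omega)).1 (hmem (K + 1) (by omega)).2
    have : 0 ≤ C / ρ * φ (ℓ (K + 1) - ℓbar) := by positivity
    simp only [zero_add] at h
    linarith [ha K]
  have hsum : Summable a := by
    rw [← summable_nat_add_iff 1]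
    refine summable_of_sum_range_le (c := a 0 + C / ρ * φ (ℓ 1 - ℓbar))
      (fun k => ha (k + 1)) fun K => ?_
    have h := hbound K
    rwa [Finset.range_eq_Ico, Finset.sum_Ico_add' a 0 K 1, zero_add,
      Finset.Ico_add_one_right_eq_Icc]
  refine ⟨hsum, fun K _ => hbound K, fun E _ _ xseq hx => ?_⟩
  have hdist : (fun k => dist (xseq k) (xseq k.succ)) = a := by
    funext k
    rw [dist_comm, dist_eq_norm, Nat.succ_eq_add_one, hx]
  exact cauchySeq_tendsto_of_complete (cauchySeq_of_summable_dist (hdist ▸ hsum))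
end
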